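/- Let k ≥ 2 be an integer and let x be a real number with x ≠ 1, x ≠ -1, and U_k(x) ≠ 0. For i ∈ [k] define α_i(x) = (U_{k-i}(x)(U_i(x) - 1) - U_{i-1}(x)(U_{k-i-1}(x) + 1))/U_k(x). Then Σ_{i=1}^{k} α_i(x) = k - (U_k(x) - U_{k-1}(x) - 1)/((x-1)·U_k(x)). -/

import Mathlib

/-- Evaluation of the Chebyshev polynomial of the second kind `U_n` at a real `x`. -/
noncomputable def chebU (n : ℤ) (x : ℝ) : ℝ := (Polynomial.Chebyshev.U ℝ n).eval x

/-- `α_i(x) = (U_{k-i}(x)(U_i(x) - 1) - U_{i-1}(x)(U_{k-i-1}(x) + 1))/U_k(x)`. -/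
noncomputable def alph (k : ℕ) (i : ℤ) (x : ℝ) : ℝ :=
  (chebU ((k : ℤ) - i) x * (chebU i x - 1) - chebU (i - 1) x * (chebU ((k : ℤ) - i - 1) x + 1)) /
    chebU (k : ℤ) x

theorem chebU_rec (n : ℤ) (x : ℝ) : chebU (n + 1) x = 2 * x * chebU n x - chebU (n - 1) x := by
  simp [chebU, Polynomial.Chebyshev.U_add_one]

theorem chebU_conv (k : ℤ) (x : ℝ) (n : ℕ) :
    chebU (k - n) x * chebU n x - chebU ((n : ℤ) - 1) x * chebU (k - n - 1) x = chebU k x := by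
  induction n with
  | zero => simp [chebU]
  | succ n ih =>
    have h1 := chebU_rec n x
    have h2 := chebU_rec (k - n - 1) x
    rw [sub_add_cancel] at h2
    push_cast
    rw [show k - ((n : ℤ) + 1) = k - n - 1 by ring, show (n : ℤ) + 1 - 1 = n by ring, h1, ← ih, h2]
    ring

theorem chebU_partial (k : ℕ) (x : ℝ) (hU : chebU (k : ℤ) x ≠ 0) (n : ℕ) :
    2 * (x - 1) * chebU k x * ∑ i ∈ Finset.Icc (1 : ℤ) (n : ℤ), alph k i x =
      2 * (x - 1) * chebU k x * n - ((chebU n x - chebU ((n : ℤ) - 1) x - 1) +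
        (chebU k x - chebU ((k : ℤ) - 1) x - chebU ((k : ℤ) - n) x
          + chebU ((k : ℤ) - n - 1) x)) := by
  induction n with
  | zero => simp [chebU]
  | succ n ih =>
    have hs : Finset.Icc (1 : ℤ) ((n + 1 : ℕ) : ℤ) =
        insert ((n : ℤ) + 1) (Finset.Icc (1 : ℤ) (n : ℤ)) := by
      ext a
      simp only [Finset.mem_Icc, Finset.mem_insert]
      omega
    rw [hs, Finset.sum_insert (by simp), mul_add, ih]
    have hc := chebU_conv k x (n + 1)
    have h1 := chebU_rec n x
    have h2 := chebU_rec (k - n - 1) x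
    rw [sub_add_cancel] at h2
    push_cast at hc ⊢
    have ha : chebU k x * alph k ((n : ℤ) + 1) x =
        chebU k x - (chebU (k - ((n : ℤ) + 1)) x + chebU n x) := by
      rw [alph, mul_div_cancel₀ _ hU]
      rw [show (n : ℤ) + 1 - 1 = n by ring] at *
      linarith
    rw [mul_assoc (2 * (x - 1)), ha]
    rw [show (k : ℤ) - ((n : ℤ) + 1) = k - n - 1 by ring, show (n : ℤ) + 1 - 1 = n by ring, h1, h2]
    ring

/-- `Σ_{i=1}^{k} α_i(x) = k - (U_k(x) - U_{k-1}(x) - 1)/((x-1)·U_k(x))`. -/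
theorem sum_alpha (k : ℕ) (hk : 2 ≤ k) (x : ℝ) (hx1 : x ≠ 1) (hx2 : x ≠ -1)
    (hU : chebU (k : ℤ) x ≠ 0) :
    ∑ i ∈ Finset.Icc (1 : ℤ) (k : ℤ), alph k i x =
      k - (chebU (k : ℤ) x - chebU ((k : ℤ) - 1) x - 1) / ((x - 1) * chebU (k : ℤ) x) := by
  have h := chebU_partial k x hU k
  have h0 : chebU ((k : ℤ) - k) x = 1 := by simp [chebU]
  have h1 : chebU ((k : ℤ) - k - 1) x = 0 := by simp [chebU]
  rw [h0, h1] at h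
  have hx : x - 1 ≠ 0 := sub_ne_zero.mpr hx1
  have hne : 2 * (x - 1) * chebU k x ≠ 0 := by positivity
  apply mul_left_cancel₀ hne
  rw [h]
  field_simp
  ring
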